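/- For every a, b ∈ ℂ, the formulas defining R_{a,b} determine a module over the N=2 Ramond algebra 𝔤: the prescribed operators on the ℤ/2-graded vector space with even basis {v_i^+ : i ∈ ℤ} and odd basis {v_i^- : i ∈ ℤ} satisfy all the defining relations of a 𝔤-module with c₀ = 0. -/

import Mathlib

open Submodule

/-- A module over the `N = 2` Ramond algebra `𝔤`: a `ℤ/2`-graded complex vector
space `V = even ⊕ odd` with parity-preserving operators `L m`, `H m`,
parity-reversing operators `Gp m` (`G_m^+`), `Gm m` (`G_m^-`), and a scalar `c₀`
(the action of the central element `C`), subject to the defining relations. -/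
structure RamondRep (V : Type) [AddCommGroup V] [Module ℂ V] : Type where
  L : ℤ → V →ₗ[ℂ] V
  H : ℤ → V →ₗ[ℂ] V
  Gp : ℤ → V →ₗ[ℂ] V
  Gm : ℤ → V →ₗ[ℂ] V
  c₀ : ℂ
  even : Submodule ℂ V
  odd : Submodule ℂ V
  grading : IsCompl even odd
  L_even : ∀ (m : ℤ), ∀ v ∈ even, L m v ∈ even
  L_odd : ∀ (m : ℤ), ∀ v ∈ odd, L m v ∈ odd
  H_even : ∀ (m : ℤ), ∀ v ∈ even, H m v ∈ even
  H_odd : ∀ (m : ℤ), ∀ v ∈ odd, H m v ∈ odd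
  Gp_even : ∀ (m : ℤ), ∀ v ∈ even, Gp m v ∈ odd
  Gp_odd : ∀ (m : ℤ), ∀ v ∈ odd, Gp m v ∈ even
  Gm_even : ∀ (m : ℤ), ∀ v ∈ even, Gm m v ∈ odd
  Gm_odd : ∀ (m : ℤ), ∀ v ∈ odd, Gm m v ∈ even
  rel_LL : ∀ (m n : ℤ) (v : V),
    L m (L n v) - L n (L m v) =
      ((n : ℂ) - (m : ℂ)) • L (m + n) v +
        ((1 / 12 : ℂ) * ((n : ℂ) ^ 3 - (n : ℂ)) *
          (if m + n = 0 then (1 : ℂ) else 0) * c₀) • v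
  rel_HH : ∀ (m n : ℤ) (v : V),
    H m (H n v) - H n (H m v) =
      ((1 / 3 : ℂ) * (m : ℂ) * (if m + n = 0 then (1 : ℂ) else 0) * c₀) • v
  rel_LH : ∀ (m n : ℤ) (v : V),
    L m (H n v) - H n (L m v) = (n : ℂ) • H (m + n) v
  rel_LGp : ∀ (m p : ℤ) (v : V),
    L m (Gp p v) - Gp p (L m v) = ((p : ℂ) - (m : ℂ) / 2) • Gp (p + m) v
  rel_LGm : ∀ (m p : ℤ) (v : V),
    L m (Gm p v) - Gm p (L m v) = ((p : ℂ) - (m : ℂ) / 2) • Gm (p + m) v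
  rel_HGp : ∀ (m p : ℤ) (v : V),
    H m (Gp p v) - Gp p (H m v) = Gp (m + p) v
  rel_HGm : ∀ (m p : ℤ) (v : V),
    H m (Gm p v) - Gm p (H m v) = -(Gm (m + p) v)
  rel_GpGm : ∀ (p q : ℤ) (v : V),
    Gp p (Gm q v) + Gm q (Gp p v) =
      (-2 : ℂ) • L (p + q) v + ((p : ℂ) - (q : ℂ)) • H (p + q) v +
        ((1 / 3 : ℂ) * ((p : ℂ) ^ 2 - 1 / 4) *
          (if p + q = 0 then (1 : ℂ) else 0) * c₀) • v
  rel_GpGp : ∀ (p q : ℤ) (v : V), Gp p (Gp q v) + Gp q (Gp p v) = 0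
  rel_GmGm : ∀ (p q : ℤ) (v : V), Gm p (Gm q v) + Gm q (Gm p v) = 0

namespace RamondRep

variable {V : Type} [AddCommGroup V] [Module ℂ V]

/-- The weight space `V_μ = {v ∈ V : L₀ v = μ v}`. -/
def wt (ρ : RamondRep V) (μ : ℂ) : Submodule ℂ V :=
  Module.End.eigenspace (ρ.L 0) μ

/-- The parity components, indexed by `ZMod 2`. -/
def parity (ρ : RamondRep V) (τ : ZMod 2) : Submodule ℂ V :=
  if τ = 0 then ρ.even else ρ.odd

/-- `V` is a weight module: it is the sum of its weight spaces. -/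
def IsWeight (ρ : RamondRep V) : Prop := (⨆ μ : ℂ, ρ.wt μ) = ⊤

/-- `V` is cuspidal: a weight module with uniformly bounded weight multiplicities
in each parity. -/
def Cuspidal (ρ : RamondRep V) : Prop :=
  ρ.IsWeight ∧ ∃ p : ℕ, ∀ (μ : ℂ) (τ : ZMod 2),
    Module.rank ℂ ↥(ρ.wt μ ⊓ ρ.parity τ) ≤ (p : Cardinal)

/-- A subspace invariant under all the operators. -/
def IsSubmod (ρ : RamondRep V) (W : Submodule ℂ V) : Prop :=
  (∀ (m : ℤ), ∀ v ∈ W, ρ.L m v ∈ W) ∧ (∀ (m : ℤ), ∀ v ∈ W, ρ.H m v ∈ W) ∧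
    (∀ (m : ℤ), ∀ v ∈ W, ρ.Gp m v ∈ W) ∧ (∀ (m : ℤ), ∀ v ∈ W, ρ.Gm m v ∈ W)

/-- A graded subspace invariant under all the operators. -/
def IsGradedSubmod (ρ : RamondRep V) (W : Submodule ℂ V) : Prop :=
  ρ.IsSubmod W ∧ W = (W ⊓ ρ.even) ⊔ (W ⊓ ρ.odd)

/-- The trivial representation: all operators act by zero. -/
def IsTrivialRep (ρ : RamondRep V) : Prop :=
  ∀ (m : ℤ) (v : V), ρ.L m v = 0 ∧ ρ.H m v = 0 ∧ ρ.Gp m v = 0 ∧ ρ.Gm m v = 0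

/-- `V` is simple: nontrivial, and its only graded submodules are `⊥` and `⊤`. -/
def IsSimple (ρ : RamondRep V) : Prop :=
  ¬ ρ.IsTrivialRep ∧
    ∀ W : Submodule ℂ V, ρ.IsGradedSubmod W → W = ⊥ ∨ W = ⊤

/-- `V` is generated by `v` as a `𝔤`-module. -/
def GeneratedBy (ρ : RamondRep V) (v : V) : Prop :=
  ∀ W : Submodule ℂ V, ρ.IsSubmod W → v ∈ W → W = ⊤

/-- `V` is a highest weight module. -/
def IsHighestWeight (ρ : RamondRep V) : Prop :=
  ∃ v : V, v ≠ 0 ∧ ρ.GeneratedBy v ∧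
    (∃ h h' : ℂ, ρ.L 0 v = h • v ∧ ρ.H 0 v = h' • v) ∧
    (∀ m : ℤ, 0 < m → ρ.L m v = 0 ∧ ρ.H m v = 0 ∧ ρ.Gp m v = 0 ∧ ρ.Gm m v = 0) ∧
    ρ.Gp 0 v = 0

/-- `V` is a lowest weight module. -/
def IsLowestWeight (ρ : RamondRep V) : Prop :=
  ∃ v : V, v ≠ 0 ∧ ρ.GeneratedBy v ∧
    (∃ h h' : ℂ, ρ.L 0 v = h • v ∧ ρ.H 0 v = h' • v) ∧
    (∀ m : ℤ, m < 0 → ρ.L m v = 0 ∧ ρ.H m v = 0 ∧ ρ.Gp m v = 0 ∧ ρ.Gm m v = 0) ∧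
    ρ.Gm 0 v = 0

end RamondRep

/-- The family `(vp i)ᵢ` (even) and `(vm i)ᵢ` (odd) realizes the `𝔤`-module
`R_{a,b}` inside `(W, σ)`: the `vp i, vm i` form a basis, span the even/odd
parts respectively, `c₀ = 0`, and the action is given by the `R_{a,b}` formulas. -/
def RamondRep.IsRab {W : Type} [AddCommGroup W] [Module ℂ W] (σ : RamondRep W)
    (vp vm : ℤ → W) (a b : ℂ) : Prop :=
  σ.c₀ = 0 ∧
  LinearIndependent ℂ (fun x : Bool × ℤ => if x.1 then vm x.2 else vp x.2) ∧
  Submodule.span ℂ (Set.range vp ∪ Set.range vm) = ⊤ ∧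
  σ.even = Submodule.span ℂ (Set.range vp) ∧
  σ.odd = Submodule.span ℂ (Set.range vm) ∧
  (∀ m i : ℤ, σ.L m (vp i) = (a + (i : ℂ) + b * (m : ℂ)) • vp (m + i)) ∧
  (∀ m i : ℤ, σ.L m (vm i) = (a + (i : ℂ) + (b - 1 / 2) * (m : ℂ)) • vm (m + i)) ∧
  (∀ m i : ℤ, σ.H m (vp i) = (2 - 2 * b) • vp (m + i)) ∧
  (∀ m i : ℤ, σ.H m (vm i) = (1 - 2 * b) • vm (m + i)) ∧
  (∀ m i : ℤ, σ.Gm m (vp i) = vm (m + i)) ∧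
  (∀ m i : ℤ, σ.Gp m (vm i) =
    (-(2 * a + (4 * b - 2) * (m : ℂ) + 2 * (i : ℂ))) • vp (m + i)) ∧
  (∀ m i : ℤ, σ.Gp m (vp i) = 0) ∧
  (∀ m i : ℤ, σ.Gm m (vm i) = 0)


/-- basis vectors -/
noncomputable def rabV (s : Bool) (i : ℤ) : (Bool × ℤ) →₀ ℂ := Finsupp.single (s, i) 1

/-- operator with prescribed values on the basis -/
noncomputable def rabOp (f g : ℤ → ((Bool × ℤ) →₀ ℂ)) :
    ((Bool × ℤ) →₀ ℂ) →ₗ[ℂ] ((Bool × ℤ) →₀ ℂ) :=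
  Finsupp.linearCombination ℂ (fun x : Bool × ℤ => if x.1 then g x.2 else f x.2)

theorem rabOp_false (f g : ℤ → ((Bool × ℤ) →₀ ℂ)) (i : ℤ) :
    rabOp f g (rabV false i) = f i := by
  simp [rabOp, rabV]

theorem rabOp_true (f g : ℤ → ((Bool × ℤ) →₀ ℂ)) (i : ℤ) :
    rabOp f g (rabV true i) = g i := by
  simp [rabOp, rabV]

theorem rab_ext {f g : ((Bool × ℤ) →₀ ℂ) →ₗ[ℂ] ((Bool × ℤ) →₀ ℂ)}
    (h0 : ∀ i, f (rabV false i) = g (rabV false i))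
    (h1 : ∀ i, f (rabV true i) = g (rabV true i)) (v) : f v = g v := by
  have : f = g := by
    refine Finsupp.lhom_ext' fun x => LinearMap.ext_ring ?_
    obtain ⟨s, i⟩ := x
    cases s
    · exact h0 i
    · exact h1 i
  rw [this]

theorem rab_span (s : Bool) : Submodule.span ℂ (Set.range (rabV s)) =
    Finsupp.supported ℂ ℂ {x : Bool × ℤ | x.1 = s} := by
  rw [Finsupp.supported_eq_span_single]
  congr 1
  ext v
  constructor
  · rintro ⟨i, rfl⟩
    exact ⟨(s, i), rfl, rfl⟩
  · rintro ⟨⟨t, i⟩, h, rfl⟩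
    simp only [Set.mem_ofPred_eq] at h
    subst h
    exact ⟨i, rfl⟩

theorem rab_compl : IsCompl (Submodule.span ℂ (Set.range (rabV false)))
    (Submodule.span ℂ (Set.range (rabV true))) := by
  rw [rab_span, rab_span]
  constructor
  · rw [Finsupp.disjoint_supported_supported_iff, Set.disjoint_left]
    intro x hx hy
    simp_all
  · rw [codisjoint_iff, ← Finsupp.supported_union]
    convert Finsupp.supported_univ
    ext ⟨x, i⟩
    cases x <;> simp

theorem rab_map (s t : Bool) (f : ((Bool × ℤ) →₀ ℂ) →ₗ[ℂ] ((Bool × ℤ) →₀ ℂ))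
    (h : ∀ i, f (rabV s i) ∈ Submodule.span ℂ (Set.range (rabV t))) :
    ∀ v ∈ Submodule.span ℂ (Set.range (rabV s)),
      f v ∈ Submodule.span ℂ (Set.range (rabV t)) := by
  intro v hv
  have : Submodule.span ℂ (Set.range (rabV s)) ≤
      (Submodule.span ℂ (Set.range (rabV t))).comap f := by
    rw [Submodule.span_le]
    rintro _ ⟨i, rfl⟩
    exact h i
  exact this hv

theorem rab_mem (s : Bool) (c : ℂ) (i : ℤ) :
    c • rabV s i ∈ Submodule.span ℂ (Set.range (rabV s)) :=
  Submodule.smul_mem _ _ (Submodule.subset_span ⟨i, rfl⟩)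

noncomputable def rabL (a b : ℂ) (m : ℤ) :=
  rabOp (fun i => (a + (i : ℂ) + b * (m : ℂ)) • rabV false (m + i))
    (fun i => (a + (i : ℂ) + (b - 1 / 2) * (m : ℂ)) • rabV true (m + i))
noncomputable def rabH (b : ℂ) (m : ℤ) :=
  rabOp (fun i => (2 - 2 * b) • rabV false (m + i)) (fun i => (1 - 2 * b) • rabV true (m + i))
noncomputable def rabGp (a b : ℂ) (m : ℤ) :=
  rabOp (fun _ => 0)
    (fun i => (-(2 * a + (4 * b - 2) * (m : ℂ) + 2 * (i : ℂ))) • rabV false (m + i))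
noncomputable def rabGm (m : ℤ) :=
  rabOp (fun i => rabV true (m + i)) (fun _ => 0)

section
variable (a b : ℂ) (m i : ℤ)
theorem rabL_f : rabL a b m (rabV false i) =
    (a + (i : ℂ) + b * (m : ℂ)) • rabV false (m + i) := rabOp_false _ _ _
theorem rabL_t : rabL a b m (rabV true i) =
    (a + (i : ℂ) + (b - 1 / 2) * (m : ℂ)) • rabV true (m + i) := rabOp_true _ _ _
theorem rabH_f : rabH b m (rabV false i) = (2 - 2 * b) • rabV false (m + i) := rabOp_false _ _ _
theorem rabH_t : rabH b m (rabV true i) = (1 - 2 * b) • rabV true (m + i) := rabOp_true _ _ _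
theorem rabGp_f : rabGp a b m (rabV false i) = 0 := rabOp_false _ _ _
theorem rabGp_t : rabGp a b m (rabV true i) =
    (-(2 * a + (4 * b - 2) * (m : ℂ) + 2 * (i : ℂ))) • rabV false (m + i) := rabOp_true _ _ _
theorem rabGm_f : rabGm m (rabV false i) = rabV true (m + i) := rabOp_false _ _ _
theorem rabGm_t : rabGm m (rabV true i) = 0 := rabOp_true _ _ _
end

set_option linter.unusedSimpArgs false

noncomputable def rabRep (a b : ℂ) : RamondRep ((Bool × ℤ) →₀ ℂ) where
  L := rabL a b
  H := rabH b
  Gp := rabGp a b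
  Gm := rabGm
  c₀ := 0
  even := Submodule.span ℂ (Set.range (rabV false))
  odd := Submodule.span ℂ (Set.range (rabV true))
  grading := rab_compl
  L_even m := rab_map false false _ fun i => by
    rw [rabL_f]; exact rab_mem _ _ _
  L_odd m := rab_map true true _ fun i => by
    rw [rabL_t]; exact rab_mem _ _ _
  H_even m := rab_map false false _ fun i => by
    rw [rabH_f]; exact rab_mem _ _ _
  H_odd m := rab_map true true _ fun i => by
    rw [rabH_t]; exact rab_mem _ _ _
  Gp_even m := rab_map false true _ fun i => by
    rw [rabGp_f]; exact Submodule.zero_mem _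
  Gp_odd m := rab_map true false _ fun i => by
    rw [rabGp_t]; exact rab_mem _ _ _
  Gm_even m := rab_map false true _ fun i => by
    rw [rabGm_f]; exact Submodule.subset_span ⟨_, rfl⟩
  Gm_odd m := rab_map true false _ fun i => by
    rw [rabGm_t]; exact Submodule.zero_mem _
  rel_LL := by
      intro m n v
      try simp only [mul_zero, zero_smul, add_zero]
      refine rab_ext (f := rabL a b (m) ∘ₗ rabL a b (n) - rabL a b (n) ∘ₗ rabL a b (m))
        (g := ((n : ℂ) - (m : ℂ)) • rabL a b (m + n)) (fun i => ?_) (fun i => ?_) v <;>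
      · simp only [LinearMap.sub_apply, LinearMap.add_apply, LinearMap.neg_apply, LinearMap.zero_apply, LinearMap.smul_apply, LinearMap.comp_apply, map_smul, map_zero, rabL_f, rabL_t, rabH_f, rabH_t, rabGp_f, rabGp_t, rabGm_f, rabGm_t]
        try rw [show n + (m + i) = m + (n + i) by ring]
        try rw [show m + n + i = m + (n + i) by ring]
        try rw [show n + m + i = m + (n + i) by ring]
        push_cast
        module
  rel_HH := by
      intro m n v
      try simp only [mul_zero, zero_smul, add_zero]
      refine rab_ext (f := rabH b (m) ∘ₗ rabH b (n) - rabH b (n) ∘ₗ rabH b (m))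
        (g := 0) (fun i => ?_) (fun i => ?_) v <;>
      · simp only [LinearMap.sub_apply, LinearMap.add_apply, LinearMap.neg_apply, LinearMap.zero_apply, LinearMap.smul_apply, LinearMap.comp_apply, map_smul, map_zero, rabL_f, rabL_t, rabH_f, rabH_t, rabGp_f, rabGp_t, rabGm_f, rabGm_t]
        try rw [show n + (m + i) = m + (n + i) by ring]
        try rw [show m + n + i = m + (n + i) by ring]
        try rw [show n + m + i = m + (n + i) by ring]
        push_cast
        module
  rel_LH := by
      intro m n v
      try simp only [mul_zero, zero_smul, add_zero]
      refine rab_ext (f := rabL a b (m) ∘ₗ rabH b (n) - rabH b (n) ∘ₗ rabL a b (m))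
        (g := (n : ℂ) • rabH b (m + n)) (fun i => ?_) (fun i => ?_) v <;>
      · simp only [LinearMap.sub_apply, LinearMap.add_apply, LinearMap.neg_apply, LinearMap.zero_apply, LinearMap.smul_apply, LinearMap.comp_apply, map_smul, map_zero, rabL_f, rabL_t, rabH_f, rabH_t, rabGp_f, rabGp_t, rabGm_f, rabGm_t]
        try rw [show n + (m + i) = m + (n + i) by ring]
        try rw [show m + n + i = m + (n + i) by ring]
        try rw [show n + m + i = m + (n + i) by ring]
        push_cast
        module
  rel_LGp := by
      intro m p v
      try simp only [mul_zero, zero_smul, add_zero]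
      refine rab_ext (f := rabL a b (m) ∘ₗ rabGp a b (p) - rabGp a b (p) ∘ₗ rabL a b (m))
        (g := ((p : ℂ) - (m : ℂ) / 2) • rabGp a b (p + m)) (fun i => ?_) (fun i => ?_) v <;>
      · simp only [LinearMap.sub_apply, LinearMap.add_apply, LinearMap.neg_apply, LinearMap.zero_apply, LinearMap.smul_apply, LinearMap.comp_apply, map_smul, map_zero, rabL_f, rabL_t, rabH_f, rabH_t, rabGp_f, rabGp_t, rabGm_f, rabGm_t]
        try rw [show p + (m + i) = m + (p + i) by ring]
        try rw [show m + p + i = m + (p + i) by ring]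
        try rw [show p + m + i = m + (p + i) by ring]
        push_cast
        module
  rel_LGm := by
      intro m p v
      try simp only [mul_zero, zero_smul, add_zero]
      refine rab_ext (f := rabL a b (m) ∘ₗ rabGm (p) - rabGm (p) ∘ₗ rabL a b (m))
        (g := ((p : ℂ) - (m : ℂ) / 2) • rabGm (p + m)) (fun i => ?_) (fun i => ?_) v <;>
      · simp only [LinearMap.sub_apply, LinearMap.add_apply, LinearMap.neg_apply, LinearMap.zero_apply, LinearMap.smul_apply, LinearMap.comp_apply, map_smul, map_zero, rabL_f, rabL_t, rabH_f, rabH_t, rabGp_f, rabGp_t, rabGm_f, rabGm_t]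
        try rw [show p + (m + i) = m + (p + i) by ring]
        try rw [show m + p + i = m + (p + i) by ring]
        try rw [show p + m + i = m + (p + i) by ring]
        push_cast
        module
  rel_HGp := by
      intro m p v
      try simp only [mul_zero, zero_smul, add_zero]
      refine rab_ext (f := rabH b (m) ∘ₗ rabGp a b (p) - rabGp a b (p) ∘ₗ rabH b (m))
        (g := rabGp a b (m + p)) (fun i => ?_) (fun i => ?_) v <;>
      · simp only [LinearMap.sub_apply, LinearMap.add_apply, LinearMap.neg_apply, LinearMap.zero_apply, LinearMap.smul_apply, LinearMap.comp_apply, map_smul, map_zero, rabL_f, rabL_t, rabH_f, rabH_t, rabGp_f, rabGp_t, rabGm_f, rabGm_t]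
        try rw [show p + (m + i) = m + (p + i) by ring]
        try rw [show m + p + i = m + (p + i) by ring]
        try rw [show p + m + i = m + (p + i) by ring]
        push_cast
        module
  rel_HGm := by
      intro m p v
      try simp only [mul_zero, zero_smul, add_zero]
      refine rab_ext (f := rabH b (m) ∘ₗ rabGm (p) - rabGm (p) ∘ₗ rabH b (m))
        (g := -rabGm (m + p)) (fun i => ?_) (fun i => ?_) v <;>
      · simp only [LinearMap.sub_apply, LinearMap.add_apply, LinearMap.neg_apply, LinearMap.zero_apply, LinearMap.smul_apply, LinearMap.comp_apply, map_smul, map_zero, rabL_f, rabL_t, rabH_f, rabH_t, rabGp_f, rabGp_t, rabGm_f, rabGm_t]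
        try rw [show p + (m + i) = m + (p + i) by ring]
        try rw [show m + p + i = m + (p + i) by ring]
        try rw [show p + m + i = m + (p + i) by ring]
        push_cast
        module
  rel_GpGm := by
      intro p q v
      try simp only [mul_zero, zero_smul, add_zero]
      refine rab_ext (f := rabGp a b (p) ∘ₗ rabGm (q) + rabGm (q) ∘ₗ rabGp a b (p))
        (g := (-2 : ℂ) • rabL a b (p + q) + ((p : ℂ) - (q : ℂ)) • rabH b (p + q)) (fun i => ?_) (fun i => ?_) v <;>
      · simp only [LinearMap.sub_apply, LinearMap.add_apply, LinearMap.neg_apply, LinearMap.zero_apply, LinearMap.smul_apply, LinearMap.comp_apply, map_smul, map_zero, rabL_f, rabL_t, rabH_f, rabH_t, rabGp_f, rabGp_t, rabGm_f, rabGm_t]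
        try rw [show q + (p + i) = p + (q + i) by ring]
        try rw [show p + q + i = p + (q + i) by ring]
        try rw [show q + p + i = p + (q + i) by ring]
        push_cast
        module
  rel_GpGp := by
      intro p q v
      try simp only [mul_zero, zero_smul, add_zero]
      refine rab_ext (f := rabGp a b (p) ∘ₗ rabGp a b (q) + rabGp a b (q) ∘ₗ rabGp a b (p))
        (g := 0) (fun i => ?_) (fun i => ?_) v <;>
      · simp only [LinearMap.sub_apply, LinearMap.add_apply, LinearMap.neg_apply, LinearMap.zero_apply, LinearMap.smul_apply, LinearMap.comp_apply, map_smul, map_zero, rabL_f, rabL_t, rabH_f, rabH_t, rabGp_f, rabGp_t, rabGm_f, rabGm_t]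
        try rw [show q + (p + i) = p + (q + i) by ring]
        try rw [show p + q + i = p + (q + i) by ring]
        try rw [show q + p + i = p + (q + i) by ring]
        push_cast
        module
  rel_GmGm := by
      intro p q v
      try simp only [mul_zero, zero_smul, add_zero]
      refine rab_ext (f := rabGm (p) ∘ₗ rabGm (q) + rabGm (q) ∘ₗ rabGm (p))
        (g := 0) (fun i => ?_) (fun i => ?_) v <;>
      · simp only [LinearMap.sub_apply, LinearMap.add_apply, LinearMap.neg_apply, LinearMap.zero_apply, LinearMap.smul_apply, LinearMap.comp_apply, map_smul, map_zero, rabL_f, rabL_t, rabH_f, rabH_t, rabGp_f, rabGp_t, rabGm_f, rabGm_t]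
        try rw [show q + (p + i) = p + (q + i) by ring]
        try rw [show p + q + i = p + (q + i) by ring]
        try rw [show q + p + i = p + (q + i) by ring]
        push_cast
        module

theorem stmt12 (a b : ℂ) :
    ∃ σ : RamondRep ((Bool × ℤ) →₀ ℂ),
      σ.IsRab (fun i => Finsupp.single (false, i) (1 : ℂ))
        (fun i => Finsupp.single (true, i) (1 : ℂ)) a b := by
  refine ⟨rabRep a b, rfl, ?_, ?_, rfl, rfl, rabL_f a b, rabL_t a b, rabH_f b, rabH_t b,
    rabGm_f, rabGp_t a b, rabGp_f a b, rabGm_t⟩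
  · have h := (Finsupp.basisSingleOne (R := ℂ) (ι := Bool × ℤ)).linearIndependent
    have e : (fun x : Bool × ℤ => if x.1 then (Finsupp.single (true, x.2) (1 : ℂ))
        else Finsupp.single (false, x.2) (1 : ℂ)) =
        (Finsupp.basisSingleOne (R := ℂ) (ι := Bool × ℤ)) := by
      funext ⟨s, i⟩
      cases s <;> simp
    rw [← e] at h
    exact h
  · rw [Submodule.span_union]
    exact rab_compl.sup_eq_top
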